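/- Under Assumptions (A), (B), (C) for the general-signal gradient descent, there exist positive constants c̃1, c̃2, c̃3, c̃4, c̃10, c̃11 such that for every iteration t satisfying c̃1·log(p/α)/(ηm) ≤ t ≤ c̃2/(ητ) with τ = max{δα, σ√((log p)/n)}, with probability at least 1 − p^{−c̃3} − n^{−c̃4}, for every threshold λ ∈ [c̃10/p, c̃11·σ√((log p)/n)], the hard-thresholded estimator β'_t defined by β'_{t,j} = g_{t,j}·l_{t,j} if |g_{t,j}·l_{t,j}| ≥ λ and β'_{t,j} = 0 otherwise, achieves exact strong-signal selection: {j : β'_{t,j} ≠ 0} = S1. -/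

import Mathlib

open MeasureTheory ProbabilityTheory Matrix Filter Topology

noncomputable section

/-- Hadamard (entrywise) product of two vectors. -/
def had {p : ℕ} (u v : Fin p → ℝ) : Fin p → ℝ := fun j => u j * v j

/-- Euclidean norm of a vector. -/
def nrm2 {p : ℕ} (v : Fin p → ℝ) : ℝ := Real.sqrt (∑ j, (v j) ^ 2)

/-- ℓ1 norm of a vector. -/
def nrm1 {p : ℕ} (v : Fin p → ℝ) : ℝ := ∑ j, |v j|

/-- Sup norm of a vector. -/
def nrmInf {p : ℕ} (v : Fin p → ℝ) : ℝ := ⨆ j, |v j|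

/-- A vector is `s`-sparse if it has at most `s` nonzero entries. -/
def Sparse {p : ℕ} (s : ℕ) (v : Fin p → ℝ) : Prop := {j | v j ≠ 0}.ncard ≤ s

/-- The `(s, δ)`-Restricted Isometry Property:
`(1−δ)‖u‖² ≤ n⁻¹‖Xu‖² ≤ (1+δ)‖u‖²` for all `s`-sparse `u`. -/
def RIP {n p : ℕ} (X : Matrix (Fin n) (Fin p) ℝ) (s : ℕ) (δ : ℝ) : Prop :=
  ∀ u : Fin p → ℝ, Sparse s u →
    (1 - δ) * nrm2 u ^ 2 ≤ (n : ℝ)⁻¹ * nrm2 (X.mulVec u) ^ 2 ∧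
      (n : ℝ)⁻¹ * nrm2 (X.mulVec u) ^ 2 ≤ (1 + δ) * nrm2 u ^ 2

/-- `k`-th largest absolute entry of a vector. -/
def theta {p : ℕ} (k : ℕ) (v : Fin p → ℝ) : ℝ :=
  (List.insertionSort (· ≥ ·) (List.ofFn fun j => |v j|)).getD (k - 1) 0

/-- Support of a vector. -/
def suppSet {p : ℕ} (β : Fin p → ℝ) : Set (Fin p) := {i | β i ≠ 0}

/-- Strong-signal index set `S1 = {i ∈ S : |β*_i| ≥ 2σ(log p)√((log p)/n)}`. -/
def strongSet {p : ℕ} (n : ℕ) (β : Fin p → ℝ) (σ : ℝ) : Set (Fin p) :=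
  {i | β i ≠ 0 ∧ 2 * σ * Real.log p * Real.sqrt (Real.log p / (n : ℝ)) ≤ |β i|}

/-- Weak-signal index set `S2 = {i ∈ S : |β*_i| ≤ 2σ√((log p)/n)}`. -/
def weakSet {p : ℕ} (n : ℕ) (β : Fin p → ℝ) (σ : ℝ) : Set (Fin p) :=
  {i | β i ≠ 0 ∧ |β i| ≤ 2 * σ * Real.sqrt (Real.log p / (n : ℝ))}

/-- The gradient-type term `n⁻¹ Xᵀ(Xβ − y)`. -/
def gradTerm {n p : ℕ} (X : Matrix (Fin n) (Fin p) ℝ) (y : Fin n → ℝ) (β : Fin p → ℝ) :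
    Fin p → ℝ :=
  (n : ℝ)⁻¹ • Xᵀ.mulVec (X.mulVec β - y)

/-- Assumptions (A), (B), (C) of the paper: `β*` is `s`-sparse with `s = s1 + s2` strong/weak
signals, `κ·m ≤ C`, `X` satisfies the `(s+1, δ)`-RIP with `δ ≤ c/(κ√s·log(p/α))`,
`0 < α ≤ c/p` and `0 < η ≤ c/(κ·log(p/α))`.  Here `m = θ_{s1}(β*)` and `κ = ‖β*‖_∞/m`. -/
def Assumptions {n p : ℕ} (s s1 s2 : ℕ) (X : Matrix (Fin n) (Fin p) ℝ)
    (βs : Fin p → ℝ) (σ α η δ C c : ℝ) : Prop :=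
  0 < n ∧ 0 < p ∧ 0 ≤ σ ∧ 0 ≤ δ ∧
  Sparse s βs ∧ (suppSet βs).ncard = s ∧
  (strongSet n βs σ).ncard = s1 ∧ (weakSet n βs σ).ncard = s2 ∧
  s = s1 + s2 ∧ suppSet βs = strongSet n βs σ ∪ weakSet n βs σ ∧
  (nrmInf βs / theta s1 βs) * theta s1 βs ≤ C ∧
  RIP X (s + 1) δ ∧
  δ ≤ c / ((nrmInf βs / theta s1 βs) * Real.sqrt s * Real.log ((p : ℝ) / α)) ∧
  0 < α ∧ α ≤ c / (p : ℝ) ∧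
  0 < η ∧ η ≤ c / ((nrmInf βs / theta s1 βs) * Real.log ((p : ℝ) / α))

/-- The statistical error level `ε = max{α², σ²Ms1/n, σ²s2(log p)/n}`. -/
def epsStat (n p s1 s2 : ℕ) (σ α M : ℝ) : ℝ :=
  max (α ^ 2) (max (σ ^ 2 * M * (s1 : ℝ) / (n : ℝ)) (σ ^ 2 * (s2 : ℝ) * Real.log p / (n : ℝ)))

/-- The level `τ = max{δα, σ√((log p)/n)}`. -/
def tauStat (n p : ℕ) (σ α δ : ℝ) : ℝ :=
  max (δ * α) (σ * Real.sqrt (Real.log p / (n : ℝ)))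

/-- Law of a random vector in ℝⁿ with i.i.d. `N(0, σ²)` entries. -/
def noiseMeasure (n : ℕ) (σ : ℝ) : Measure (Fin n → ℝ) :=
  Measure.pi fun _ => gaussianReal 0 (σ ^ 2).toNNReal

/-- Gradient descent iterates for the Hadamard parametrization `β = g∘l`:
`g₀ = α·𝟏`, `l₀ = 0`, `g_{t+1} = g_t − η·l_t ∘ [n⁻¹Xᵀ(X(g_t∘l_t) − y)]`,
`l_{t+1} = l_t − η·g_t ∘ [n⁻¹Xᵀ(X(g_t∘l_t) − y)]`. -/
def glIter {n p : ℕ} (X : Matrix (Fin n) (Fin p) ℝ) (y : Fin n → ℝ) (η α : ℝ) :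
    ℕ → (Fin p → ℝ) × (Fin p → ℝ)
  | 0 => (fun _ => α, fun _ => 0)
  | t + 1 =>
      ((glIter X y η α t).1 -
          η • had (glIter X y η α t).2
            (gradTerm X y (had (glIter X y η α t).1 (glIter X y η α t).2)),
        (glIter X y η α t).2 -
          η • had (glIter X y η α t).1
            (gradTerm X y (had (glIter X y η α t).1 (glIter X y η α t).2)))

set_option maxHeartbeats 1000000 in
lemma strong_step (a b B e E η m A : ℝ) (hη : 0 < η) (hη1 : η ≤ 1/100) (hm : 0 < m) (hmB : m ≤ B)
    (hB : B ≤ 1) (hA : A ≤ 1) (ha : 0 < a) (hb : 0 < b) (hab : a * b ≤ A)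
    (hd : |(a^2 - b^2)/4 - B| ≤ B) (he : |e| ≤ E) (hE : E ≤ m/8) (q : ℝ)
    (hq : q = -((a^2 - b^2)/4 - B + e)) :
    0 < a * (1 + η * q) ∧ 0 < b * (1 - η * q) ∧ (a * (1 + η * q)) * (b * (1 - η * q)) ≤ A ∧
    |((a * (1 + η * q))^2 - (b * (1 - η * q))^2)/4 - B| ≤ B ∧
    (∃ x, η * a^2/4 ≤ x ∧ x ≤ 1 ∧
      |((a * (1 + η * q))^2 - (b * (1 - η * q))^2)/4 - B| ≤ (1 - x) * |(a^2 - b^2)/4 - B| + x * (2 * E)) ∧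
    (m ≤ a^2 → m ≤ (a * (1 + η * q))^2) ∧
    (a^2 < m → a * (1 + η * m / 2) ≤ a * (1 + η * q)) := by
  obtain ⟨β, hβ⟩ : ∃ β, β = (a^2 - b^2)/4 := ⟨_, rfl⟩
  obtain ⟨P, hP⟩ : ∃ P, P = (a^2 + b^2)/2 := ⟨_, rfl⟩
  obtain ⟨d, hdd⟩ : ∃ d, d = β - B := ⟨_, rfl⟩
  rw [← hβ, ← hdd] at hd hq
  have hE0 : 0 ≤ E := le_trans (abs_nonneg _) he
  have hd' := abs_le.1 hd
  have he' := abs_le.1 he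
  have hβ0 : 0 ≤ β := by linarith
  have hβ2 : β ≤ 2 * B := by linarith
  have hP1 : 2 * β ≤ P := by rw [hβ, hP]; linarith [sq_nonneg b]
  have hP2 : P ≤ 2 * β + A := by
    have hba : b ≤ a := by
      by_contra h
      push Not at h
      have := mul_self_lt_mul_self ha.le h; linarith [hβ, sq a, sq b]
    rw [hβ, hP]; have := mul_le_mul_of_nonneg_right hba hb.le; linarith [sq a, sq b]
  have hPa : a^2/2 ≤ P := by rw [hP]; linarith [sq_nonneg b]
  have hqabs : |q| ≤ |d| + E := by
    rw [hq, abs_neg]; exact (abs_add_le _ _).trans (by linarith)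
  have hq98 : |q| ≤ 9/8 := by linarith
  have hq' := abs_le.1 hq98
  have hηq : |η * q| ≤ 1/50 := by
    rw [abs_mul, abs_of_pos hη]; linarith [mul_le_mul hη1 hq98 (abs_nonneg q) (by norm_num)]
  have hηq' := abs_le.1 hηq
  have hA0 : 0 < A := lt_of_lt_of_le (mul_pos ha hb) hab
  have hy0 : 0 ≤ η * P := mul_nonneg hη.le (by linarith)
  have hy1 : η * P ≤ 1 := by linarith [mul_le_mul hη1 (show P ≤ 5 by linarith) (by linarith) (by norm_num)]
  have hform : ((a * (1 + η * q))^2 - (b * (1 - η * q))^2)/4 - B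
      = d * (1 - η * P) - η * P * e + β * (η * q)^2 := by
    rw [hdd, hP]
    have : q = -(β - B + e) := by rw [hq, hdd]
    have e1 : ((a * (1 + η * q))^2 - (b * (1 - η * q))^2)/4 - B
      = β - B + β * (η*q)^2 + η * ((a^2 + b^2)/2) * q := by rw [hβ]; ring
    rw [e1]; nth_rewrite 2 [this]; ring
  have hsq : β * (η*q)^2 ≤ η * P * ((|d| + E)/16) := by
    have h1 : (η * q)^2 ≤ η * ((|d| + E) / 8) := by
      have h2: (η * q)^2 = |η*q| * (η * |q|) := by
        rw [← sq_abs, sq, ]; nth_rewrite 2 [abs_mul]; rw [abs_of_pos hη]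
      rw [h2]
      calc |η*q| * (η * |q|) ≤ (1/8) * (η * (|d| + E)) := by
            apply mul_le_mul (by linarith) _ (by positivity) (by norm_num)
            exact mul_le_mul_of_nonneg_left hqabs hη.le
        _ = _ := by ring
    calc β * (η*q)^2 ≤ (P/2) * (η * ((|d| + E) / 8)) := by
          apply mul_le_mul (by linarith) h1 (by positivity) (by linarith)
      _ = _ := by ring
  have hmain : |((a * (1 + η * q))^2 - (b * (1 - η * q))^2)/4 - B| ≤
      (1 - 15/16 * (η*P)) * |d| + 15/16 * (η * P) * (2 * E) := by
    rw [hform]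
    have t1 : |d * (1 - η * P)| = |d| * (1 - η * P) := by
      rw [abs_mul, abs_of_nonneg (a := 1 - η * P) (by linarith)]
    have t2 : |η * P * e| ≤ η * P * E := by
      rw [abs_mul, abs_of_nonneg hy0]; exact mul_le_mul_of_nonneg_left he hy0
    have t3 : |β * (η * q)^2| ≤ η * P * ((|d| + E)/16) := by
      rw [abs_of_nonneg (by positivity)]; exact hsq
    have t4 : |d * (1 - η * P) - η * P * e + β * (η * q)^2| ≤
      |d * (1 - η * P)| + |η * P * e| + |β * (η * q)^2| :=
      (abs_add_le _ _).trans (by linarith [abs_sub (d * (1 - η * P)) (η * P * e)])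
    linarith [mul_nonneg hy0 hE0]
  have hpos1 : 0 < 1 + η * q := by linarith
  have hpos2 : 0 < 1 - η * q := by linarith
  refine ⟨by positivity, by positivity, ?_, ?_, ⟨15/16 * (η*P), ?_, ?_, ?_⟩, ?_, ?_⟩
  · have : a * (1 + η * q) * (b * (1 - η * q)) = a * b - a * b * (η * q)^2 := by ring
    rw [this]
    have : 0 ≤ a * b * (η * q)^2 := by positivity
    linarith
  · refine hmain.trans ?_
    have h1 : 0 ≤ 1 - 15/16 * (η*P) := by linarith
    have h2 : 15/16 * (η*P) * (2 * E) ≤ 15/16 * (η*P) * B := mul_le_mul_of_nonneg_left (by linarith) (by linarith)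
    linarith [mul_le_mul_of_nonneg_left hd h1]
  · have := mul_le_mul_of_nonneg_left hPa hη.le
    linarith
  · linarith
  · rw [← hβ, ← hdd]; exact hmain
  · intro hma
    by_cases hc : β ≤ m/2
    · have : 0 ≤ q := by rw [hq]; linarith
      have : 0 ≤ η * q := by positivity
      have : a ≤ a * (1 + η * q) := by exact le_mul_of_one_le_right ha.le (by linarith)
      linarith [pow_le_pow_left₀ ha.le this 2]
    · push Not at hc
      have h2 : 2 * m ≤ a^2 := by linarith [sq_nonneg b]
      have h3 : (1/2:ℝ) ≤ (1 + η*q)^2 := by rw [show (1 + η*q)^2 = 1 + 2 * (η*q) + (η*q)^2 by ring]; linarith [sq_nonneg (η*q)]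
      rw [mul_pow]
      linarith [mul_le_mul h2 h3 (by norm_num) (sq_nonneg a)]
  · intro hma
    have h1 : β ≤ m/4 := by linarith [sq_nonneg b]
    have h2 : m / 2 ≤ q := by rw [hq]; linarith
    apply mul_le_mul_of_nonneg_left _ ha.le
    linarith [mul_le_mul_of_nonneg_left h2 hη.le]

lemma strong_end (a b A m : ℝ) (hm : 0 < m) (ha : 0 < a) (hb : 0 < b) (hab : a * b ≤ A)
    (hA : A ≤ m / 2) (hma : m ≤ a^2) : m / 8 ≤ (a^2 - b^2)/4 := by
  have h1 : (a * b)^2 ≤ (m/2)^2 := by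
    apply pow_le_pow_left₀ (by positivity)
    linarith
  have h2 : b^2 ≤ m / 2 := by
    by_contra hc
    push Not at hc
    have h3 : m * (m/2) ≤ a^2 * b^2 := mul_le_mul hma hc.le (by positivity) (by positivity)
    have h4 : 0 < m * m := by positivity
    nlinarith
  linarith

set_option maxHeartbeats 2000000 in
/-- The numeric core: invariants of the dynamics. -/
lemma dyn {p : ℕ} (S1 : Set (Fin p)) (S : Finset (Fin p)) (βs : Fin p → ℝ)
    (g l r : ℕ → Fin p → ℝ) (η α m N L θ δ ρ : ℝ) (T0 : ℕ)
    (hg0 : ∀ j, g 0 j = α) (hl0 : ∀ j, l 0 j = 0)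
    (hg : ∀ t j, g (t+1) j = g t j - η * (l t j * r t j))
    (hl : ∀ t j, l (t+1) j = l t j - η * (g t j * r t j))
    (hη : 0 < η) (hη1 : η ≤ 1/100) (hα : 0 < α) (hα1 : α ≤ 1/(100 * (p:ℝ))) (hp : 3 ≤ p)
    (hm : 0 < m) (hmN : m ≤ N) (hN1 : N ≤ 1) (hL : 1 ≤ L) (hLα : - Real.log α ≤ L)
    (hS1 : ∀ j ∈ S1, m ≤ |βs j| ∧ |βs j| ≤ N)
    (hS1c : ∀ j, j ∉ S1 → |βs j| ≤ 2 * ρ)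
    (hθ : 0 ≤ θ) (hθN : θ * N ≤ m / (100 * L)) (hθ1 : θ ≤ 1/100) (hδ : 0 ≤ δ) (hδ1 : δ ≤ 1)
    (hρ : 1 / (p:ℝ) ≤ ρ) (hρm : 4 * L * ρ ≤ m / 100)
    (hSsub : ∀ j, j ∉ S → j ∉ S1 ∧ βs j = 0)
    (hkey : ∀ t j M Q, 0 ≤ M → (∀ k ∈ S, |g t k * l t k - βs k| ≤ M) →
      (∑ k ∈ Sᶜ, |g t k * l t k| ≤ Q) →
      |r t j - (g t j * l t j - βs j)| ≤ θ * M + δ * Q + 4 * ρ)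
    (hT0 : T0 = ⌈4 * L / (η * m)⌉₊) (t : ℕ) (ht : (t:ℝ) * (η * ρ) ≤ 1/100) :
    (∀ j ∈ S1, T0 ≤ t → m / 8 ≤ |g t j * l t j|) ∧ (∀ j, j ∉ S1 → |g t j * l t j| ≤ α^2) := by
  obtain ⟨w, hw⟩ : ∃ w : ℕ → ℝ, w = fun t => (1 - η * m / 8)^(t - T0) := ⟨_, rfl⟩
  obtain ⟨W, hW⟩ : ∃ W : ℕ → ℝ, W = fun t => ∑ u ∈ Finset.range t, w u := ⟨_, rfl⟩
  obtain ⟨Φ, hΦ⟩ : ∃ Φ : ℕ → ℝ, Φ = fun t => η * (m / (100 * L) * W t + 9 * ρ * t) := ⟨_, rfl⟩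
  have hp0 : (3:ℝ) ≤ p := by exact_mod_cast hp
  have hm1 : m ≤ 1 := hmN.trans hN1
  have hηm : η * m ≤ 1/100 := by linarith [mul_le_mul hη1 hm1 hm.le (by norm_num)]
  have hηm0 : 0 < η * m := by positivity
  have hρ0 : 0 < ρ := lt_of_lt_of_le (by positivity) hρ
  have hαρ : α ≤ ρ / 100 := by
    refine hα1.trans ?_
    have : 1 / (100 * (p:ℝ)) = (1/p)/100 := by field_simp
    rw [this]; linarith
  have hρm' : 400 * ρ ≤ m := by linarith [mul_le_mul_of_nonneg_right hL hρ0.le]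
  have hα1' : α ≤ 1/100 := by linarith
  have hα2 : α^2 ≤ ρ := by linarith [mul_le_mul hαρ hα1' hα.le (by positivity), sq α]
  have hpα : p * α^2 ≤ ρ := by
    have : p * α ≤ 1 := by
      have := mul_le_mul_of_nonneg_left hα1 (by positivity : (0:ℝ) ≤ p)
      have e : (p:ℝ) * (1 / (100 * p)) = 1/100 := by field_simp
      linarith
    linarith [mul_le_mul_of_nonneg_right this hα.le, sq α, mul_assoc (p:ℝ) α α, congrArg (fun x => (p:ℝ) * x) (sq α)]
  have hw0 : ∀ t, 0 ≤ w t := by intro t; rw [hw]; apply pow_nonneg; linarith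
  have hw1 : ∀ t, w t ≤ 1 := by intro t; rw [hw]; apply pow_le_one₀ <;> linarith
  have hWs : ∀ t, W (t+1) = W t + w t := by intro t; rw [hW]; simp [Finset.sum_range_succ]
  have hWb : ∀ t, η * m * W t ≤ η * m * T0 + 8 := by
    have key : ∀ t, η * m * W t ≤ η * m * T0 + 8 * (1 - w t) ∧ (t ≤ T0 → W t = t) := by
      intro t
      induction t with
      | zero => simp [hW, hw]; positivity
      | succ t ih =>
        by_cases h : t < T0
        · have e1 : t - T0 = 0 := by omega
          have e2 : t + 1 - T0 = 0 := by omega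
          have e3 : w t = 1 := by simp [hw, e1]
          have e4 : w (t+1) = 1 := by simp [hw, e2]
          have e5 : W (t+1) = (t+1 : ℕ) := by rw [hWs, ih.2 h.le, e3]; push_cast; ring
          refine ⟨?_, fun _ => e5⟩
          rw [e5, e4]
          have : ((t+1:ℕ):ℝ) ≤ T0 := by exact_mod_cast h
          linarith [mul_le_mul_of_nonneg_left this hηm0.le]
        · have e1 : t + 1 - T0 = (t - T0) + 1 := by omega
          have e2 : w (t+1) = w t * (1 - η * m / 8) := by simp only [hw, e1, pow_succ]
          refine ⟨?_, fun h' => by omega⟩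
          rw [hWs, e2]; linarith [ih.1]
    intro t; linarith [(key t).1, hw0 t]
  have hT0b : η * m * T0 ≤ 4 * L + 1 := by
    have h1 : (T0:ℝ) < 4 * L / (η * m) + 1 := by rw [hT0]; apply Nat.ceil_lt_add_one; positivity
    have h2 : η * m * (4 * L / (η * m)) = 4 * L := by field_simp
    linarith [mul_le_mul_of_nonneg_left h1.le hηm0.le]
  have hΦb : ∀ u : ℕ, (u:ℝ) * (η * ρ) ≤ 1/100 → Φ u ≤ 1/2 := by
    intro u hu
    have h1 : Φ u = (η * m * W u) / (100 * L) + 9 * (u * (η * ρ)) := by rw [hΦ]; ring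
    have h2 : (η * m * W u) / (100 * L) ≤ 13/100 := by
      rw [div_le_iff₀ (by positivity)]
      linarith [hWb u]
    linarith
  have hexp : Real.exp (1/2) ≤ 2 := by
    have := Real.log_two_gt_d9
    rw [← Real.le_log_iff_exp_le (by norm_num)]; linarith
  have hgrow : ∀ u : ℕ, T0 ≤ u → 1 ≤ α * (1 + η * m / 2)^u := by
    intro u hu
    have h1 : Real.exp (η * m / 4) ≤ 1 + η * m / 2 := by
      have hb := Real.abs_exp_sub_one_le (x := η * m / 4) (by rw [abs_of_pos] <;> linarith)
      rw [abs_of_pos (a := η * m / 4) (by linarith)] at hb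
      have := (abs_le.1 hb).2
      linarith
    have h2 : 4 * L / (η * m) ≤ u := by
      refine (Nat.le_ceil _).trans ?_
      rw [← hT0]; exact_mod_cast hu
    have h3 : L ≤ u * (η * m / 4) := by
      rw [div_le_iff₀ hηm0] at h2; linarith
    have h4 : Real.exp L ≤ (1 + η * m / 2)^u := by
      calc Real.exp L ≤ Real.exp (u * (η * m / 4)) := Real.exp_le_exp.2 h3
        _ = (Real.exp (η * m / 4))^u := by rw [Real.exp_nat_mul]
        _ ≤ _ := pow_le_pow_left₀ (Real.exp_pos _).le h1 u
    have h5 : α⁻¹ ≤ Real.exp L := by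
      have : Real.exp (-Real.log α) = α⁻¹ := by rw [Real.exp_neg, Real.exp_log hα]
      rw [← this]; exact Real.exp_le_exp.2 hLα
    calc (1:ℝ) = α * α⁻¹ := by field_simp
      _ ≤ _ := mul_le_mul_of_nonneg_left (h5.trans h4) hα.le
  -- from the exponential bound to the product bound
  have hsmall : ∀ u : ℕ, (u:ℝ) * (η * ρ) ≤ 1/100 → ∀ j,
      |g u j + l u j| ≤ α * Real.exp (Φ u) → |g u j - l u j| ≤ α * Real.exp (Φ u) →
      |g u j * l u j| ≤ α^2 := by
    intro u hu j h1 h2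
    have h3 : Real.exp (Φ u) ≤ 2 := (Real.exp_le_exp.2 (hΦb u hu)).trans hexp
    have h4 : |g u j + l u j| ≤ 2 * α := h1.trans (by linarith [mul_le_mul_of_nonneg_left h3 hα.le])
    have h5 : |g u j - l u j| ≤ 2 * α := h2.trans (by linarith [mul_le_mul_of_nonneg_left h3 hα.le])
    have h6 : (g u j + l u j)^2 ≤ (2*α)^2 := sq_le_sq' (abs_le.1 h4).1 (abs_le.1 h4).2
    have h7 : (g u j - l u j)^2 ≤ (2*α)^2 := sq_le_sq' (abs_le.1 h5).1 (abs_le.1 h5).2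
    rw [abs_le]
    constructor <;> linarith [sq_nonneg (g u j + l u j), sq_nonneg (g u j - l u j)]
  have hInv : ∀ u : ℕ, (u:ℝ) * (η * ρ) ≤ 1/100 →
      (∀ j ∈ S1, ∀ s : ℝ, s^2 = 1 → s * βs j = |βs j| →
        0 < g u j + s * l u j ∧ 0 < g u j - s * l u j ∧
        (g u j + s * l u j) * (g u j - s * l u j) ≤ α^2 ∧
        abs (((g u j + s * l u j)^2 - (g u j - s * l u j)^2)/4 - |βs j|) ≤ |βs j| ∧
        abs (((g u j + s * l u j)^2 - (g u j - s * l u j)^2)/4 - |βs j|) ≤ N * w u + 24 * ρ ∧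
        (m ≤ (g u j + s * l u j)^2 ∨ α * (1 + η * m / 2)^u ≤ g u j + s * l u j)) ∧
      (∀ j, j ∉ S1 → |g u j + l u j| ≤ α * Real.exp (Φ u) ∧ |g u j - l u j| ≤ α * Real.exp (Φ u)) := by
    intro u
    induction u with
    | zero =>
      intro _
      constructor
      · intro j hj s hs hsβ
        have h0 : w 0 = 1 := by simp [hw]
        rw [hg0, hl0, h0]
        have hb := hS1 j hj
        have e : ((α + s * 0)^2 - (α - s * 0)^2)/4 - |βs j| = -|βs j| := by ring
        rw [e, abs_neg, abs_abs]
        refine ⟨by simpa using hα, by simpa using hα, by apply le_of_eq; ring, le_rfl, by linarith, Or.inr (by simp)⟩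
      · intro j hj
        have : Φ 0 = 0 := by simp [hΦ, hW]
        rw [hg0, hl0, this]; simp [abs_of_pos hα]
    | succ u ih =>
      intro hu'
      have hu : (u:ℝ) * (η * ρ) ≤ 1/100 := by
        push_cast at hu'
        have : 0 ≤ η * ρ := by positivity
        linarith
      obtain ⟨ih1, ih2⟩ := ih hu
      have hsm : ∀ j, j ∉ S1 → |g u j * l u j| ≤ α^2 := fun j hj =>
        hsmall u hu j (ih2 j hj).1 (ih2 j hj).2
      have hNw : 0 ≤ N * w u := mul_nonneg (by linarith) (hw0 u)
      have hsgn : ∀ x : ℝ, ∃ s : ℝ, s^2 = 1 ∧ s * x = |x| := by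
        intro x
        rcases le_total 0 x with h | h
        · exact ⟨1, by norm_num, by rw [abs_of_nonneg h]; ring⟩
        · exact ⟨-1, by norm_num, by rw [abs_of_nonpos h]; ring⟩
      obtain ⟨E, hEdef⟩ : ∃ E, E = m / (100 * L) * w u + 6 * ρ := ⟨_, rfl⟩
      have hErr : ∀ j, |r u j - (g u j * l u j - βs j)| ≤ E := by
        intro j
        refine (hkey u j (N * w u + 24 * ρ) ρ (by positivity) ?_ ?_).trans ?_
        · intro k hk
          by_cases hk1 : k ∈ S1
          · obtain ⟨s, hs, hsβ⟩ := hsgn (βs k)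
            have h := (ih1 k hk1 s hs hsβ).2.2.2.2.1
            have e : ((g u k + s * l u k)^2 - (g u k - s * l u k)^2)/4 - |βs k|
              = s * (g u k * l u k - βs k) := by rw [← hsβ]; ring
            have hs1 : |s| = 1 := by
              have := sq_abs s
              rw [hs] at this
              exact (pow_eq_one_iff_of_nonneg (abs_nonneg s) two_ne_zero).1 this
            rw [e, abs_mul, hs1, one_mul] at h
            exact h
          · have h1 := hsm k hk1
            have h2 := hS1c k hk1
            exact (abs_sub _ _).trans (by linarith)
        · calc ∑ k ∈ Sᶜ, |g u k * l u k| ≤ ∑ k ∈ Sᶜ, α^2 := by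
                apply Finset.sum_le_sum
                intro k hk
                exact hsm k (hSsub k (by simpa using hk)).1
            _ ≤ ∑ k : Fin p, α^2 :=
                Finset.sum_le_sum_of_subset_of_nonneg (Finset.subset_univ _) (fun _ _ _ => by positivity)
            _ = p * α^2 := by simp
            _ ≤ ρ := hpα
        · rw [hEdef]
          have h1 : θ * N * w u ≤ m / (100 * L) * w u := mul_le_mul_of_nonneg_right hθN (hw0 u)
          linarith [mul_le_mul_of_nonneg_right hθ1 hρ0.le, mul_le_mul_of_nonneg_right hδ1 hρ0.le]
      have hmL : m / (100 * L) ≤ m / 100 := by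
        apply div_le_div_of_nonneg_left hm.le (by norm_num); linarith
      have hmL0 : 0 ≤ m / (100 * L) := by positivity
      have hEw : E ≤ m / 100 * w u + 6 * ρ := by
        rw [hEdef]
        have := mul_le_mul_of_nonneg_right hmL (hw0 u)
        linarith
      have hE8 : E ≤ m / 8 := by
        have : m / 100 * w u ≤ m / 100 := by linarith [mul_le_mul_of_nonneg_left (hw1 u) (by positivity : 0 ≤ m / 100)]
        linarith
      constructor
      · intro j hj s hs hsβ
        obtain ⟨i1, i2, i3, i4, i5, i6⟩ := ih1 j hj s hs hsβ
        have hb := hS1 j hj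
        have hs1 : |s| = 1 := by
          have := sq_abs s
          rw [hs] at this
          exact (pow_eq_one_iff_of_nonneg (abs_nonneg s) two_ne_zero).1 this
        have hstep := strong_step (g u j + s * l u j) (g u j - s * l u j) |βs j|
          (s * (r u j - (g u j * l u j - βs j))) E η m (α^2) hη hη1 hm hb.1 (hb.2.trans hN1)
          (by linarith) i1 i2 i3 i4 (by rw [abs_mul, hs1, one_mul]; exact hErr j) hE8
          (-(s * r u j)) (by rw [← hsβ]; ring)
        have ea : g (u+1) j + s * l (u+1) j = (g u j + s * l u j) * (1 + η * (-(s * r u j))) := by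
          rw [hg, hl]; linear_combination (η * l u j * r u j) * hs
        have eb : g (u+1) j - s * l (u+1) j = (g u j - s * l u j) * (1 - η * (-(s * r u j))) := by
          rw [hg, hl]; linear_combination (η * l u j * r u j) * hs
        rw [← ea, ← eb] at hstep
        obtain ⟨j1, j2, j3, j4, ⟨x, jx1, jx2, j5⟩, j6, j7⟩ := hstep
        refine ⟨j1, j2, j3, j4, ?_, ?_⟩
        · by_cases h : u < T0
          · have e2 : u + 1 - T0 = 0 := by omega
            have e4 : w (u+1) = 1 := by simp [hw, e2]
            rw [e4]; linarith
          · have e1 : u + 1 - T0 = (u - T0) + 1 := by omega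
            have e2 : w (u+1) = w u * (1 - η * m / 8) := by simp only [hw, e1, pow_succ]
            have hma : m ≤ (g u j + s * l u j)^2 := by
              rcases i6 with h6 | h6
              · exact h6
              · have := hgrow u (by omega)
                have h7 : (1:ℝ) ≤ g u j + s * l u j := this.trans h6
                linarith [one_le_pow₀ (n := 2) h7]
            have hx : η * m / 4 ≤ x := by linarith [mul_le_mul_of_nonneg_left hma hη.le]
            have h2E : 2 * E ≤ N * w u / 2 + 24 * ρ := by
              have : m / 100 * w u ≤ N / 100 * w u := by linarith [mul_le_mul_of_nonneg_right hmN (hw0 u)]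
              linarith
            have h1 := mul_le_mul_of_nonneg_left i5 (by linarith : 0 ≤ 1 - x)
            have h2 := mul_le_mul_of_nonneg_left h2E (by linarith : 0 ≤ x)
            have h3 := mul_le_mul_of_nonneg_right hx hNw
            rw [e2]
            linarith
        · rcases i6 with h6 | h6
          · exact Or.inl (j6 h6)
          · by_cases hc : m ≤ (g u j + s * l u j)^2
            · exact Or.inl (j6 hc)
            · push Not at hc
              right
              refine le_trans ?_ (j7 hc)
              rw [pow_succ, ← mul_assoc]
              exact mul_le_mul_of_nonneg_right h6 (by positivity)
      · intro j hj
        have hr : |r u j| ≤ m / (100 * L) * w u + 9 * ρ := by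
          have e : r u j = (r u j - (g u j * l u j - βs j)) + (g u j * l u j - βs j) := by ring
          rw [e]
          refine (abs_add_le _ _).trans ?_
          have h1 := hErr j
          have h2 := abs_sub (g u j * l u j) (βs j)
          have h3 := hsm j hj
          have h4 := hS1c j hj
          rw [hEdef] at h1
          linarith
        have hΦs : Φ (u+1) = Φ u + η * (m / (100 * L) * w u + 9 * ρ) := by
          simp only [hΦ, hWs]; push_cast; ring
        have hf : 1 + η * |r u j| ≤ Real.exp (η * (m / (100 * L) * w u + 9 * ρ)) := by
          have h1 := Real.add_one_le_exp (η * (m / (100 * L) * w u + 9 * ρ))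
          linarith [mul_le_mul_of_nonneg_left hr hη.le]
        obtain ⟨k1, k2⟩ := ih2 j hj
        have ea : g (u+1) j + l (u+1) j = (g u j + l u j) * (1 - η * r u j) := by
          rw [hg, hl]; ring
        have eb : g (u+1) j - l (u+1) j = (g u j - l u j) * (1 + η * r u j) := by
          rw [hg, hl]; ring
        have f1 : |1 - η * r u j| ≤ 1 + η * |r u j| := by
          refine (abs_sub _ _).trans ?_
          rw [abs_mul, abs_of_pos hη, abs_one]
        have f2 : |1 + η * r u j| ≤ 1 + η * |r u j| := by
          refine (abs_add_le _ _).trans ?_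
          rw [abs_mul, abs_of_pos hη, abs_one]
        rw [ea, eb, hΦs, Real.exp_add, abs_mul, abs_mul, ← mul_assoc]
        exact ⟨mul_le_mul k1 (f1.trans hf) (abs_nonneg _) (by positivity),
          mul_le_mul k2 (f2.trans hf) (abs_nonneg _) (by positivity)⟩
  obtain ⟨I1, I2⟩ := hInv t ht
  refine ⟨?_, fun j hj => hsmall t ht j (I2 j hj).1 (I2 j hj).2⟩
  intro j hj hT
  obtain ⟨s, hs, hsβ⟩ : ∃ s : ℝ, s^2 = 1 ∧ s * βs j = |βs j| := by
    rcases le_total 0 (βs j) with h | h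
    · exact ⟨1, by norm_num, by rw [abs_of_nonneg h]; ring⟩
    · exact ⟨-1, by norm_num, by rw [abs_of_nonpos h]; ring⟩
  obtain ⟨i1, i2, i3, i4, i5, i6⟩ := I1 j hj s hs hsβ
  have hma : m ≤ (g t j + s * l t j)^2 := by
    rcases i6 with h6 | h6
    · exact h6
    · have := hgrow t hT
      have h7 : (1:ℝ) ≤ g t j + s * l t j := this.trans h6
      linarith [one_le_pow₀ (n := 2) h7]
  have hs1 : |s| = 1 := by
    have := sq_abs s
    rw [hs] at this
    exact (pow_eq_one_iff_of_nonneg (abs_nonneg s) two_ne_zero).1 this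
  have e : |g t j * l t j| = |((g t j + s * l t j)^2 - (g t j - s * l t j)^2)/4| := by
    have : ((g t j + s * l t j)^2 - (g t j - s * l t j)^2)/4 = s * (g t j * l t j) := by ring
    rw [this, abs_mul s, hs1, one_mul]
  rw [e]
  refine le_trans ?_ (le_abs_self _)
  exact strong_end _ _ _ _ hm i1 i2 i3 (by linarith) hma

lemma gauss_tail {n : ℕ} (hn : 0 < n) (σ : ℝ) (hσ : 0 < σ) (a : Fin n → ℝ)
    (ha : ∑ i, a i ^ 2 ≤ 2 / (n:ℝ)) (x : ℝ) (hx : 0 ≤ x) :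
    noiseMeasure n σ {w | 4 * σ * Real.sqrt (x / n) ≤ ∑ i, a i * w i} ≤
      ENNReal.ofReal (Real.exp (- (4 * x))) := by
  have hn' : (0:ℝ) < n := by exact_mod_cast hn
  have hsub : ∀ i, HasSubgaussianMGF (fun w : Fin n → ℝ => a i * w i)
      ((Real.toNNReal (a i ^ 2)) * (σ^2).toNNReal) (noiseMeasure n σ) := by
    intro i
    have hcm : ∀ h : HasSubgaussianMGF (fun w : Fin n → ℝ => w i) (σ^2).toNNReal (noiseMeasure n σ), HasSubgaussianMGF (fun w : Fin n → ℝ => a i * w i)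
        ((Real.toNNReal (a i ^ 2)) * (σ^2).toNNReal) (noiseMeasure n σ) := by
      intro h
      have h' := h.const_mul (a i)
      convert h' using 1
      congr 1
      ext
      rw [Real.coe_toNNReal _ (sq_nonneg _)]
      rfl
    apply hcm
    have h1 : HasSubgaussianMGF id (σ^2).toNNReal (gaussianReal 0 (σ^2).toNNReal) := by
      constructor
      · intro t; exact integrable_exp_mul_gaussianReal t
      · intro t
        rw [mgf_gaussianReal (μ := 0) (v := (σ^2).toNNReal) (by simp)]
        simp
    have h2 := (measurePreserving_eval (fun _ : Fin n => gaussianReal 0 (σ^2).toNNReal) i)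
    have h3 : HasSubgaussianMGF id (σ^2).toNNReal
        ((noiseMeasure n σ).map (Function.eval i)) := by
      rw [noiseMeasure, h2.map_eq]; exact h1
    exact HasSubgaussianMGF.of_map h2.measurable.aemeasurable h3
  have hind : iIndepFun (fun (i : Fin n) (w : Fin n → ℝ) => a i * w i) (noiseMeasure n σ) :=
    iIndepFun_pi (X := fun i (y : ℝ) => a i * y)
      (μ := fun _ : Fin n => gaussianReal 0 (σ^2).toNNReal) (fun i => by fun_prop)
  have hsum := HasSubgaussianMGF.sum_of_iIndepFun hind (s := Finset.univ) (fun i _ => hsub i)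
  have hV : HasSubgaussianMGF (fun w : Fin n → ℝ => ∑ i, a i * w i)
      (2 * σ^2 / n).toNNReal (noiseMeasure n σ) := by
    refine ⟨hsum.1, fun t => (hsum.2 t).trans ?_⟩
    apply Real.exp_le_exp.2
    have hc : ((∑ i, (Real.toNNReal (a i ^ 2) * (σ^2).toNNReal) : NNReal) : ℝ)
        ≤ ((2 * σ^2 / n).toNNReal : ℝ) := by
      rw [NNReal.coe_sum, Real.coe_toNNReal _ (by positivity)]
      simp only [NNReal.coe_mul, Real.coe_toNNReal _ (sq_nonneg _)]
      rw [← Finset.sum_mul]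
      calc (∑ i, a i ^ 2) * σ^2 ≤ (2 / (n:ℝ)) * σ^2 :=
            mul_le_mul_of_nonneg_right ha (sq_nonneg _)
        _ = _ := by ring
    have := mul_le_mul_of_nonneg_right hc (sq_nonneg t)
    linarith
  have hprob : IsProbabilityMeasure (noiseMeasure n σ) := by
    unfold noiseMeasure; infer_instance
  have hfin := hV.measure_ge_le (ε := 4 * σ * Real.sqrt (x / n)) (by positivity)
  rw [Real.coe_toNNReal _ (by positivity)] at hfin
  have he : -(4 * σ * Real.sqrt (x / n))^2 / (2 * (2 * σ^2 / n)) = -(4 * x) := by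
    rw [mul_pow, Real.sq_sqrt (by positivity)]
    field_simp; ring
  rw [he] at hfin
  rw [← ENNReal.ofReal_toReal (measure_ne_top (noiseMeasure n σ) _)]
  exact ENNReal.ofReal_le_ofReal hfin

lemma gauss_union {n p : ℕ} (hn : 0 < n) (hp : 3 ≤ p) (σ : ℝ) (hσ : 0 < σ)
    (a : Fin p → Fin n → ℝ) (ha : ∀ j, ∑ i, a j i ^ 2 ≤ 2 / (n:ℝ)) :
    ENNReal.ofReal (1 - (p:ℝ)^(-1:ℝ)) ≤ noiseMeasure n σ
      {w | ∀ j, |∑ i, a j i * w i| ≤ 4 * σ * Real.sqrt (Real.log p / n)} := by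
  have hprob : IsProbabilityMeasure (noiseMeasure n σ) := by
    unfold noiseMeasure; infer_instance
  have hp0 : (3:ℝ) ≤ p := by exact_mod_cast hp
  have hpp : (0:ℝ) < p := by linarith
  set ε := 4 * σ * Real.sqrt (Real.log p / n) with hε
  set G := {w : Fin n → ℝ | ∀ j, |∑ i, a j i * w i| ≤ ε} with hG
  have hlog : 0 ≤ Real.log p := Real.log_nonneg (by linarith)
  have hmeas : MeasurableSet G := by
    have : G = ⋂ j, {w : Fin n → ℝ | |∑ i, a j i * w i| ≤ ε} := by ext w; simp [hG]
    rw [this]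
    apply MeasurableSet.iInter
    intro j
    apply measurableSet_le _ measurable_const
    apply Measurable.comp (g := fun x : ℝ => |x|) (by fun_prop)
    fun_prop
  have hexp : Real.exp (-(4 * Real.log p)) = ((p:ℝ)^4)⁻¹ := by
    rw [Real.exp_neg, show 4 * Real.log p = ((4:ℕ):ℝ) * Real.log p by norm_num, Real.exp_nat_mul, Real.exp_log hpp]
  have hbad : noiseMeasure n σ Gᶜ ≤ ENNReal.ofReal ((p:ℝ)^(-1:ℝ)) := by
    have hsub : Gᶜ ⊆ ⋃ j : Fin p, ({w | ε ≤ ∑ i, a j i * w i} ∪ {w | ε ≤ ∑ i, (- a j i) * w i}) := by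
      intro w hw
      simp only [hG, Set.mem_compl_iff, Set.mem_setOf_eq, not_forall, not_le] at hw
      obtain ⟨j, hj⟩ := hw
      simp only [Set.mem_iUnion, Set.mem_union, Set.mem_setOf_eq]
      refine ⟨j, ?_⟩
      rcases lt_abs.1 hj with h | h
      · exact Or.inl h.le
      · right
        have : ∑ i, (- a j i) * w i = - ∑ i, a j i * w i := by
          rw [← Finset.sum_neg_distrib]; simp
        rw [this]; exact h.le
    calc noiseMeasure n σ Gᶜ ≤ ∑ j : Fin p, noiseMeasure n σ
          ({w | ε ≤ ∑ i, a j i * w i} ∪ {w | ε ≤ ∑ i, (- a j i) * w i}) :=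
          (measure_mono hsub).trans (measure_iUnion_fintype_le _ _)
      _ ≤ ∑ j : Fin p, ENNReal.ofReal (2 * ((p:ℝ)^4)⁻¹) := by
          apply Finset.sum_le_sum
          intro j _
          refine (measure_union_le _ _).trans ?_
          have h1 := gauss_tail hn σ hσ (a j) (ha j) (Real.log p) hlog
          have h2 := gauss_tail hn σ hσ (fun i => - a j i) (by simpa using ha j) (Real.log p) hlog
          rw [hexp] at h1 h2
          refine (add_le_add h1 h2).trans ?_
          rw [← ENNReal.ofReal_add (by positivity) (by positivity)]
          apply ENNReal.ofReal_le_ofReal; linarith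
      _ = ENNReal.ofReal (p * (2 * ((p:ℝ)^4)⁻¹)) := by
          rw [Finset.sum_const, Finset.card_univ, Fintype.card_fin, nsmul_eq_mul,
            ENNReal.ofReal_mul (p := (p:ℝ)) (by positivity), ENNReal.ofReal_natCast]
      _ ≤ _ := by
          apply ENNReal.ofReal_le_ofReal
          rw [Real.rpow_neg_one]
          have : (p:ℝ) * (2 * ((p:ℝ)^4)⁻¹) = (2 / (p:ℝ)^2) * (p:ℝ)⁻¹ := by field_simp
          rw [this]
          have h2 : 2 / (p:ℝ)^2 ≤ 1 := by rw [div_le_one (by positivity)]; nlinarith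
          exact mul_le_of_le_one_left (by positivity) h2
  have h1 : noiseMeasure n σ G = 1 - noiseMeasure n σ Gᶜ := by
    rw [← prob_compl_eq_one_sub hmeas.compl, compl_compl]
  rw [h1, ENNReal.ofReal_sub _ (by positivity), ENNReal.ofReal_one]
  exact tsub_le_tsub_left hbad 1

lemma nrm2_sq {p : ℕ} (v : Fin p → ℝ) : nrm2 v ^ 2 = v ⬝ᵥ v := by
  unfold nrm2
  rw [Real.sq_sqrt (Finset.sum_nonneg fun i _ => sq_nonneg _)]
  simp [dotProduct, sq]

lemma rip_bil {n p : ℕ} (X : Matrix (Fin n) (Fin p) ℝ) (s : ℕ) (δ : ℝ) (hR : RIP X (s+1) δ)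
    (S : Finset (Fin p)) (hS : S.card ≤ s) (v : Fin p → ℝ) (hv : ∀ k, k ∉ S → v k = 0) (j : Fin p) :
    |(n:ℝ)⁻¹ * (X.mulVec (Pi.single j 1) ⬝ᵥ X.mulVec v) - v j| ≤ δ * nrm2 v := by
  have hM0 : 0 ≤ nrm2 v := Real.sqrt_nonneg _
  rcases hM0.eq_or_lt with hM | hM
  · have h1 : v ⬝ᵥ v = 0 := by rw [← nrm2_sq, ← hM]; norm_num
    have h2 : v = 0 := dotProduct_self_eq_zero.1 h1
    rw [← hM, h2]; simp
  · obtain ⟨M, hMd⟩ : ∃ M, M = nrm2 v := ⟨_, rfl⟩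
    have hsp : ∀ c : ℝ, Sparse (s+1) (c • Pi.single j (1:ℝ) + v) := by
      intro c
      unfold Sparse
      have hsub : {k | (c • (Pi.single j (1:ℝ) : Fin p → ℝ) + v) k ≠ 0} ⊆ ((insert j S : Finset (Fin p)) : Set (Fin p)) := by
        intro k hk
        by_contra hc
        simp only [Finset.coe_insert, Set.mem_insert_iff, Finset.mem_coe, not_or] at hc
        apply hk
        simp [hc.1, hv k hc.2]
      refine (Set.ncard_le_ncard hsub (Finset.finite_toSet _)).trans ?_
      rw [Set.ncard_coe_finset]
      exact (Finset.card_insert_le _ _).trans (by omega)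
    have hvv : v ⬝ᵥ v = M^2 := by rw [hMd, nrm2_sq]
    have key : ∀ c : ℝ, (1 - δ) * (c^2 + 2 * c * v j + M^2) ≤ (n:ℝ)⁻¹ *
        (c^2 * (X.mulVec (Pi.single j 1) ⬝ᵥ X.mulVec (Pi.single j 1)) +
          2 * c * (X.mulVec (Pi.single j 1) ⬝ᵥ X.mulVec v) + X.mulVec v ⬝ᵥ X.mulVec v) ∧
        (n:ℝ)⁻¹ *
        (c^2 * (X.mulVec (Pi.single j 1) ⬝ᵥ X.mulVec (Pi.single j 1)) +
          2 * c * (X.mulVec (Pi.single j 1) ⬝ᵥ X.mulVec v) + X.mulVec v ⬝ᵥ X.mulVec v) ≤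
          (1 + δ) * (c^2 + 2 * c * v j + M^2) := by
      intro c
      have h := hR _ (hsp c)
      rw [nrm2_sq, nrm2_sq, Matrix.mulVec_add, Matrix.mulVec_smul] at h
      have e1 : (c • Pi.single j (1:ℝ) + v) ⬝ᵥ (c • Pi.single j (1:ℝ) + v) = c^2 + 2 * c * v j + M^2 := by
        rw [← hvv]
        simp only [add_dotProduct, dotProduct_add, smul_dotProduct, dotProduct_smul, single_dotProduct,
          dotProduct_single, Pi.add_apply, Pi.smul_apply, smul_eq_mul, Pi.single_eq_same]
        ring
      have e2 : (c • X.mulVec (Pi.single j 1) + X.mulVec v) ⬝ᵥ (c • X.mulVec (Pi.single j 1) + X.mulVec v) =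
        (c^2 * (X.mulVec (Pi.single j 1) ⬝ᵥ X.mulVec (Pi.single j 1)) +
          2 * c * (X.mulVec (Pi.single j 1) ⬝ᵥ X.mulVec v) + X.mulVec v ⬝ᵥ X.mulVec v) := by
        simp only [add_dotProduct, dotProduct_add, smul_dotProduct, dotProduct_smul, smul_eq_mul]
        rw [dotProduct_comm (X.mulVec v) (X.mulVec (Pi.single j 1))]
        ring
      rw [e1, e2] at h
      exact h
    rw [← hMd] at hM ⊢
    have k1 := key M
    have k2 := key (-M)
    obtain ⟨A, hA⟩ : ∃ A, A = X.mulVec (Pi.single j 1) ⬝ᵥ X.mulVec (Pi.single j 1) := ⟨_, rfl⟩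
    obtain ⟨B, hB⟩ : ∃ B, B = X.mulVec (Pi.single j 1) ⬝ᵥ X.mulVec v := ⟨_, rfl⟩
    obtain ⟨D, hD⟩ : ∃ D, D = X.mulVec v ⬝ᵥ X.mulVec v := ⟨_, rfl⟩
    rw [← hA, ← hB, ← hD] at k1 k2
    rw [← hB]
    have u1 : M * ((n:ℝ)⁻¹ * B - v j) ≤ M * (δ * M) := by linarith [k1.2, k2.1]
    have u2 : M * (-(δ * M)) ≤ M * ((n:ℝ)⁻¹ * B - v j) := by linarith [k1.1, k2.2]
    rw [abs_le]
    exact ⟨le_of_mul_le_mul_left u2 hM, le_of_mul_le_mul_left u1 hM⟩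

lemma rip_grad {n p : ℕ} (X : Matrix (Fin n) (Fin p) ℝ) (s : ℕ) (δ : ℝ) (hδ : 0 ≤ δ) (hs : 1 ≤ s)
    (hR : RIP X (s+1) δ)
    (S : Finset (Fin p)) (hS : S.card ≤ s) (v : Fin p → ℝ) (M Q : ℝ) (hM : 0 ≤ M)
    (hvM : ∀ k ∈ S, |v k| ≤ M) (hvQ : ∑ k ∈ Sᶜ, |v k| ≤ Q) (j : Fin p) :
    |(n:ℝ)⁻¹ * (X.mulVec (Pi.single j 1) ⬝ᵥ X.mulVec v) - v j| ≤ δ * Real.sqrt s * M + δ * Q := by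
  classical
  obtain ⟨v1, hv1⟩ : ∃ v1 : Fin p → ℝ, v1 = fun k => if k ∈ S then v k else 0 := ⟨_, rfl⟩
  have hdec : v = v1 + ∑ k ∈ Sᶜ, v k • (Pi.single k (1:ℝ) : Fin p → ℝ) := by
    ext i
    simp only [hv1, Pi.add_apply, Finset.sum_apply, Pi.smul_apply, smul_eq_mul, Pi.single_apply]
    by_cases h : i ∈ S
    · simp [h]
    · simp [h]
  have h1 := rip_bil X s δ hR S hS v1 (fun k hk => by simp [hv1, hk]) j
  have hn1 : nrm2 v1 ≤ Real.sqrt s * M := by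
    unfold nrm2
    apply Real.sqrt_le_iff.2
    refine ⟨by positivity, ?_⟩
    rw [mul_pow, Real.sq_sqrt (by positivity)]
    calc ∑ k, v1 k ^ 2 = ∑ k ∈ S, v k ^ 2 := by
          simp [hv1, ite_pow, Finset.sum_ite_mem]
      _ ≤ ∑ k ∈ S, M^2 := by
          apply Finset.sum_le_sum
          intro k hk
          exact sq_le_sq' (abs_le.1 (hvM k hk)).1 (abs_le.1 (hvM k hk)).2
      _ = S.card * M^2 := by simp
      _ ≤ s * M^2 := by
          apply mul_le_mul_of_nonneg_right _ (sq_nonneg _)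
          exact_mod_cast hS
  have h2 : ∀ k, |(n:ℝ)⁻¹ * (X.mulVec (Pi.single j 1) ⬝ᵥ X.mulVec (Pi.single k 1)) - (Pi.single k (1:ℝ) : Fin p → ℝ) j| ≤ δ := by
    intro k
    have := rip_bil X s δ hR {k} (by simpa using hs) (Pi.single k 1) (fun i hi => by
      simp only [Finset.mem_singleton] at hi; simp [hi]) j
    have e : nrm2 (Pi.single k (1:ℝ) : Fin p → ℝ) = 1 := by
      unfold nrm2; simp [Pi.single_apply, ite_pow]
    rwa [e, mul_one] at this
  have hlin : (n:ℝ)⁻¹ * (X.mulVec (Pi.single j 1) ⬝ᵥ X.mulVec v) - v j =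
      ((n:ℝ)⁻¹ * (X.mulVec (Pi.single j 1) ⬝ᵥ X.mulVec v1) - v1 j) +
      ∑ k ∈ Sᶜ, v k * ((n:ℝ)⁻¹ * (X.mulVec (Pi.single j 1) ⬝ᵥ X.mulVec (Pi.single k 1)) - (Pi.single k (1:ℝ) : Fin p → ℝ) j) := by
    conv_lhs => rw [hdec]
    have e1 : X.mulVec (∑ k ∈ Sᶜ, v k • (Pi.single k (1:ℝ) : Fin p → ℝ)) =
        ∑ k ∈ Sᶜ, v k • X.mulVec (Pi.single k (1:ℝ)) := by
      have := map_sum X.mulVecLin (fun k => v k • (Pi.single k (1:ℝ) : Fin p → ℝ)) Sᶜ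
      simp only [Matrix.mulVecLin_apply, Matrix.mulVec_smul] at this
      exact this
    rw [Matrix.mulVec_add, dotProduct_add, e1, dotProduct_sum]
    simp only [dotProduct_smul, smul_eq_mul, Pi.add_apply, Finset.sum_apply, Pi.smul_apply, mul_sub,
      Finset.sum_sub_distrib, mul_add, Finset.mul_sum]
    have e2 : ∀ k, (n:ℝ)⁻¹ * (v k * (X.mulVec (Pi.single j 1) ⬝ᵥ X.mulVec (Pi.single k 1))) =
      v k * ((n:ℝ)⁻¹ * (X.mulVec (Pi.single j 1) ⬝ᵥ X.mulVec (Pi.single k 1))) := fun k => by ring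
    simp only [e2]
    ring
  rw [hlin]
  refine (abs_add_le _ _).trans ?_
  have h3 : |∑ k ∈ Sᶜ, v k * ((n:ℝ)⁻¹ * (X.mulVec (Pi.single j 1) ⬝ᵥ X.mulVec (Pi.single k 1)) - (Pi.single k (1:ℝ) : Fin p → ℝ) j)| ≤ δ * Q := by
    refine (Finset.abs_sum_le_sum_abs _ _).trans ?_
    calc _ ≤ ∑ k ∈ Sᶜ, |v k| * δ := by
          apply Finset.sum_le_sum
          intro k _
          rw [abs_mul]
          exact mul_le_mul_of_nonneg_left (h2 k) (abs_nonneg _)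
      _ = δ * ∑ k ∈ Sᶜ, |v k| := by rw [← Finset.sum_mul, mul_comm]
      _ ≤ _ := mul_le_mul_of_nonneg_left hvQ hδ
  have h4 := mul_le_mul_of_nonneg_left hn1 hδ
  linarith

lemma grad_eq {n p : ℕ} (X : Matrix (Fin n) (Fin p) ℝ) (βs β : Fin p → ℝ) (w : Fin n → ℝ) (j : Fin p) :
    gradTerm X (X.mulVec βs + w) β j =
      (n:ℝ)⁻¹ * (X.mulVec (Pi.single j 1) ⬝ᵥ X.mulVec (β - βs)) - ∑ i, ((n:ℝ)⁻¹ * X i j) * w i := by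
  have e : X.mulVec (Pi.single j 1) = fun i => X i j := by ext i; simp
  rw [e, Matrix.mulVec_sub]
  unfold gradTerm
  simp only [Pi.smul_apply, smul_eq_mul, Matrix.mulVec, dotProduct, Matrix.transpose_apply, Pi.sub_apply, Pi.add_apply,
    Finset.mul_sum]
  rw [← Finset.sum_sub_distrib]
  apply Finset.sum_congr rfl
  intro i _
  ring

lemma col_norm {n p : ℕ} (hn : 0 < n) (X : Matrix (Fin n) (Fin p) ℝ) (s : ℕ) (δ : ℝ) (hδ : δ ≤ 1)
    (hR : RIP X (s+1) δ) (j : Fin p) : ∑ i, ((n:ℝ)⁻¹ * X i j)^2 ≤ 2 / (n:ℝ) := by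
  have hn' : (0:ℝ) < n := by exact_mod_cast hn
  have hsp : Sparse (s+1) (Pi.single j (1:ℝ) : Fin p → ℝ) := by
    unfold Sparse
    have : {k | (Pi.single j (1:ℝ) : Fin p → ℝ) k ≠ 0} ⊆ {j} := by
      intro k hk
      by_contra h
      simp only [Set.mem_singleton_iff] at h
      apply hk; simp [h]
    exact (Set.ncard_le_ncard this).trans (by simp)
  have h := (hR _ hsp).2
  rw [nrm2_sq, nrm2_sq] at h
  have e : X.mulVec (Pi.single j 1) = fun i => X i j := by ext i; simp
  rw [e] at h
  simp only [single_dotProduct, Pi.single_eq_same, mul_one] at h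
  have e2 : ∑ i, ((n:ℝ)⁻¹ * X i j)^2 = (n:ℝ)⁻¹ * ((n:ℝ)⁻¹ * ((fun i => X i j) ⬝ᵥ fun i => X i j)) := by
    simp only [dotProduct, Finset.mul_sum]
    apply Finset.sum_congr rfl
    intro i _; ring
  rw [e2, div_eq_mul_inv, mul_comm 2]
  exact mul_le_mul_of_nonneg_left (by linarith) (by positivity)

lemma sorted_getD_ge (l : List ℝ) (hl : l.Pairwise (· ≥ ·)) (x : ℝ) (k : ℕ)
    (hk : k < l.countP (fun y => decide (x ≤ y))) : x ≤ l.getD k 0 := by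
  induction l generalizing k with
  | nil => simp at hk
  | cons a l ih =>
    rw [List.pairwise_cons] at hl
    by_cases ha : x ≤ a
    · cases k with
      | zero => simpa using ha
      | succ k =>
        simp only [List.getD_cons_succ]
        apply ih hl.2
        rw [List.countP_cons_of_pos (by simpa using ha)] at hk
        omega
    · exfalso
      rw [List.countP_cons_of_neg (by simpa using ha)] at hk
      have : l.countP (fun y => decide (x ≤ y)) = 0 := by
        rw [List.countP_eq_zero]
        intro b hb
        have := hl.1 b hb
        simp only [decide_eq_true_eq, not_le]
        push Not at ha
        exact lt_of_le_of_lt this ha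
      omega

lemma sorted_getD_le (l : List ℝ) (hl : l.Pairwise (· ≥ ·)) (x : ℝ) (hx : 0 ≤ x) (k : ℕ)
    (hk : l.countP (fun y => decide (x < y)) ≤ k) : l.getD k 0 ≤ x := by
  induction l generalizing k with
  | nil => simpa using hx
  | cons a l ih =>
    rw [List.pairwise_cons] at hl
    by_cases ha : x < a
    · rw [List.countP_cons_of_pos (by simpa using ha)] at hk
      cases k with
      | zero => omega
      | succ k =>
        simp only [List.getD_cons_succ]
        apply ih hl.2
        omega
    · push Not at ha
      have hz : l.countP (fun y => decide (x < y)) = 0 := by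
        rw [List.countP_eq_zero]
        intro b hb
        have := hl.1 b hb
        simp only [decide_eq_true_eq, not_lt]
        exact le_trans this ha
      cases k with
      | zero => simpa using ha
      | succ k =>
        simp only [List.getD_cons_succ]
        apply ih hl.2
        omega

lemma countP_ofFn' {p : ℕ} (f : Fin p → ℝ) (P : ℝ → Prop) [DecidablePred P] :
    (List.ofFn f).countP (fun y => decide (P y)) = {j | P (f j)}.ncard := by
  classical
  rw [List.ofFn_eq_map, List.countP_map]
  have h : {j | P (f j)} = ((Finset.univ.filter fun j => P (f j) : Finset (Fin p)) : Set (Fin p)) := by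
    ext; simp
  rw [h, Set.ncard_coe_finset, Finset.card_def, Finset.filter_val, List.countP_eq_length_filter]
  simp [Finset.univ, Fintype.elems, Function.comp_def, List.finRange]

lemma theta_ge {p : ℕ} (v : Fin p → ℝ) (k : ℕ) (hk : 1 ≤ k) (x : ℝ)
    (h : k ≤ {j | x ≤ |v j|}.ncard) : x ≤ theta k v := by
  unfold theta
  apply sorted_getD_ge _ (List.pairwise_insertionSort _ _)
  rw [(List.perm_insertionSort _ _).countP_eq, countP_ofFn' _ (fun y => x ≤ y)]
  omega

lemma theta_le {p : ℕ} (v : Fin p → ℝ) (k : ℕ) (x : ℝ) (hx : 0 ≤ x)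
    (h : {j | x < |v j|}.ncard ≤ k - 1) : theta k v ≤ x := by
  unfold theta
  apply sorted_getD_le _ (List.pairwise_insertionSort _ _) _ hx
  rw [(List.perm_insertionSort _ _).countP_eq, countP_ofFn' _ (fun y => x < y)]
  exact h

lemma theta_nonneg {p : ℕ} (v : Fin p → ℝ) (k : ℕ) : 0 ≤ theta k v := by
  unfold theta
  rw [List.getD_eq_getElem?_getD]
  rcases h : (List.insertionSort (· ≥ ·) (List.ofFn fun j => |v j|))[k-1]? with _ | y
  · simp
  · have := List.mem_of_getElem? h
    rw [List.mem_insertionSort, List.mem_ofFn] at this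
    obtain ⟨j, rfl⟩ := this
    simp

lemma abs_le_nrmInf {p : ℕ} (v : Fin p → ℝ) (j : Fin p) : |v j| ≤ nrmInf v :=
  le_ciSup (f := fun j => |v j|) (Set.finite_range _).bddAbove j

set_option maxHeartbeats 2000000 in
lemma good_case {n p s s1 s2 : ℕ} {X : Matrix (Fin n) (Fin p) ℝ} {βs : Fin p → ℝ}
    {σ α η δ : ℝ} (hA : Assumptions s s1 s2 X βs σ α η δ 1 (1/100)) (t0 : ℕ) (lam0 : ℝ)
    (ht1 : 4 * Real.log ((p : ℝ) / α) / (η * theta s1 βs) ≤ (t0 : ℝ))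
    (ht2 : (t0 : ℝ) ≤ (1/100) / (η * tauStat n p σ α δ))
    (hl1 : 1 / (p : ℝ) ≤ lam0)
    (hl2 : lam0 ≤ (1/4) * σ * Real.sqrt (Real.log p / (n : ℝ))) :
    ENNReal.ofReal (1 - (p:ℝ)^(-1:ℝ)) ≤ noiseMeasure n σ
            {w | ∀ t : ℕ,
              4 * Real.log ((p : ℝ) / α) / (η * theta s1 βs) ≤ (t : ℝ) →
              (t : ℝ) ≤ (1/100) / (η * tauStat n p σ α δ) →
              ∀ lam : ℝ, 1 / (p : ℝ) ≤ lam →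
                lam ≤ (1/4) * σ * Real.sqrt (Real.log p / (n : ℝ)) →
                {j : Fin p |
                    (if lam ≤ |(glIter X (X.mulVec βs + w) η α t).1 j *
                          (glIter X (X.mulVec βs + w) η α t).2 j| then
                        (glIter X (X.mulVec βs + w) η α t).1 j *
                          (glIter X (X.mulVec βs + w) η α t).2 j
                      else 0) ≠ 0} = strongSet n βs σ} := by
  obtain ⟨hn, hp, hσ, hδ, -, hcard, hs1, hs2, hs, hsupp, hκC, hR, hδc, hα, hαc, hη, hηc⟩ := hA
  have hp0 : (0:ℝ) < p := by exact_mod_cast hp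
  have hp1 : (1:ℝ) ≤ p := by exact_mod_cast hp
  set ρ := σ * Real.sqrt (Real.log p / (n:ℝ)) with hρd
  set L := Real.log ((p:ℝ)/α) with hLd
  set m := theta s1 βs with hmd
  set N := nrmInf βs with hNd
  have hαp : α * p ≤ 1/100 := by rwa [le_div_iff₀ hp0] at hαc
  have hL : 1 ≤ L := by
    rw [hLd, Real.le_log_iff_exp_le (by positivity), le_div_iff₀ hα]
    have := Real.exp_one_lt_d9
    have h3 : α ≤ 1/100 := by nlinarith
    nlinarith
  have hL0 : 0 < L := by linarith
  have hLα : - Real.log α ≤ L := by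
    rw [hLd, Real.log_div hp0.ne' hα.ne']
    have := Real.log_nonneg hp1
    linarith
  have hm0 : m ≠ 0 := by
    intro h
    rw [h] at hηc
    simp at hηc; linarith
  have hm : 0 < m := lt_of_le_of_ne (theta_nonneg _ _) (Ne.symm hm0)
  have hN1 : N ≤ 1 := by rwa [div_mul_cancel₀ _ hm0] at hκC
  have hρ4 : 1 / (p:ℝ) ≤ ρ / 4 := by
    have : (1/4) * σ * Real.sqrt (Real.log p / (n : ℝ)) = ρ / 4 := by rw [hρd]; ring
    linarith
  have hρ0 : 0 < ρ := by
    have : 0 < 1 / (p:ℝ) := by positivity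
    linarith
  have hσ0 : 0 < σ := by
    rcases hσ.eq_or_lt with h | h
    · rw [hρd, ← h] at hρ0; simp at hρ0
    · exact h
  have hτ : ρ ≤ tauStat n p σ α δ := le_max_right _ _
  have hτ0 : 0 < tauStat n p σ α δ := by linarith
  have htρ : ∀ t : ℕ, (t : ℝ) ≤ (1/100) / (η * tauStat n p σ α δ) → (t:ℝ) * (η * ρ) ≤ 1/100 := by
    intro t ht
    rw [le_div_iff₀ (by positivity)] at ht
    refine le_trans ?_ ht
    gcongr
  have hLρ : 4 * L * ρ ≤ m / 100 := by
    have h1 := htρ t0 ht2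
    have h2 : 4 * L / (η * m) * (η * ρ) ≤ 1/100 := by
      refine le_trans ?_ h1
      gcongr
    have h3 : 4 * L / (η * m) * (η * ρ) = 4 * L * ρ / m := by field_simp
    rw [h3, div_le_iff₀ hm] at h2
    linarith
  have hLρ' : ρ ≤ L * ρ := by nlinarith
  have hnon : ∀ j, j ∉ strongSet n βs σ → |βs j| ≤ 2 * ρ := by
    intro j hj
    by_cases h : βs j = 0
    · rw [h]; simp; linarith
    · have hj2 : j ∈ suppSet βs := h
      rw [hsupp] at hj2
      rcases hj2 with hj2 | hj2
      · exact absurd hj2 hj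
      · refine hj2.2.trans (le_of_eq ?_); rw [hρd]; ring
  have hs1pos : 1 ≤ s1 := by
    by_contra hc
    have hs10 : s1 = 0 := by omega
    have he : strongSet n βs σ = ∅ := by
      rw [hs10] at hs1
      exact (Set.ncard_eq_zero (Set.toFinite _)).1 hs1
    have : m ≤ 2 * ρ := by
      apply theta_le _ _ _ (by linarith)
      have : {j | 2 * ρ < |βs j|} = ∅ := by
        ext j
        constructor
        · intro hj
          have h1 : 2 * ρ < |βs j| := hj
          have := hnon j (by rw [he]; exact fun h => h)
          linarith
        · exact fun h => h.elim
      rw [this, Set.ncard_empty]; omega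
    linarith
  have hne : (strongSet n βs σ).Nonempty := by
    rw [← Set.ncard_pos (Set.toFinite _)]; omega
  have hstrong : ∀ j ∈ strongSet n βs σ, 2 * ρ * Real.log p ≤ |βs j| := by
    intro j hj
    refine le_trans (le_of_eq ?_) hj.2
    rw [hρd]; ring
  have hlogp0 : 0 < Real.log p := by
    by_contra hc
    have : Real.log p / (n:ℝ) ≤ 0 := div_nonpos_of_nonpos_of_nonneg (by linarith) (by positivity)
    rw [hρd, Real.sqrt_eq_zero_of_nonpos this] at hρ0
    simp at hρ0
  have hp2 : 2 ≤ p := by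
    by_contra hc
    have : p = 1 := by omega
    rw [this] at hlogp0; simp at hlogp0
  have hp3 : 3 ≤ p := by
    by_contra hc
    have h2 : p = 2 := by omega
    obtain ⟨j0, hj0⟩ := hne
    have h1 := hstrong j0 hj0
    have h3 := abs_le_nrmInf βs j0
    rw [h2] at h1 hρ4
    push_cast at h1 hρ4
    have := Real.log_two_gt_d9
    nlinarith
  have hp3' : (3:ℝ) ≤ p := by exact_mod_cast hp3
  have hlogp : 1 < Real.log p := by
    rw [Real.lt_log_iff_exp_lt hp0]
    have := Real.exp_one_lt_d9
    linarith
  have hρlog : ρ < ρ * Real.log p := by nlinarith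
  have hmS : ∀ j ∈ strongSet n βs σ, m ≤ |βs j| := by
    intro j hj
    apply theta_le _ _ _ (abs_nonneg _)
    have hsub : {k | |βs j| < |βs k|} ⊆ strongSet n βs σ \ {j} := by
      intro k hk
      have hk' : |βs j| < |βs k| := hk
      refine ⟨?_, ?_⟩
      · by_contra hc
        have h1 := hnon k hc
        have h2 := hstrong j hj
        linarith
      · intro h
        have : k = j := h
        rw [this] at hk'; exact lt_irrefl _ hk'
    refine (Set.ncard_le_ncard hsub (Set.toFinite _)).trans ?_
    rw [Set.ncard_sdiff_singleton_of_mem hj, hs1]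
  have hmN : m ≤ N := by
    obtain ⟨j0, hj0⟩ := hne
    exact (hmS j0 hj0).trans (abs_le_nrmInf βs j0)
  have hmρ : 2 * ρ * Real.log p ≤ m := by
    apply theta_ge _ _ hs1pos
    rw [← hs1]
    exact Set.ncard_le_ncard (fun j hj => hstrong j hj) (Set.toFinite _)
  have hN0 : 0 < N := by linarith
  have hs1' : 1 ≤ s := by omega
  have hsq : 1 ≤ Real.sqrt s := by
    rw [Real.one_le_sqrt]; exact_mod_cast hs1'
  have hκ : 1 ≤ N / m := by rw [le_div_iff₀ hm]; linarith
  have hκL : 1 ≤ N / m * L := one_le_mul_of_one_le_of_one_le hκ hL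
  have hc1 : 1/100 / (N / m * L) ≤ (1:ℝ)/100 := by
    rw [div_le_iff₀ (by linarith)]; linarith
  have hη1 : η ≤ 1/100 := hηc.trans hc1
  have hθc : δ * Real.sqrt s ≤ 1/100 / (N / m * L) := by
    have e : 1/100 / (N / m * Real.sqrt s * L) = 1/100 / (N / m * L) / Real.sqrt s := by
      rw [div_div]; ring_nf
    rw [e, le_div_iff₀ (by linarith)] at hδc
    exact hδc
  have hθ1 : δ * Real.sqrt s ≤ 1/100 := hθc.trans hc1
  have hδ1 : δ ≤ 1 := by
    have := le_mul_of_one_le_right hδ hsq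
    linarith
  have hθN : δ * Real.sqrt s * N ≤ m / (100 * L) := by
    have h1 := mul_le_mul_of_nonneg_right hθc hN0.le
    refine h1.trans (le_of_eq ?_)
    field_simp
  have hα1 : α ≤ 1 / (100 * (p:ℝ)) := by
    rw [le_div_iff₀ (by positivity)]; linarith
  have hgu := gauss_union hn hp3 σ hσ0 (fun j i => (n:ℝ)⁻¹ * X i j) (col_norm hn X s δ hδ1 hR)
  refine hgu.trans (measure_mono ?_)
  intro w hw t hta htb lam hla hlb
  have hw' : ∀ j, |∑ i, ((n:ℝ)⁻¹ * X i j) * w i| ≤ 4 * ρ := by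
    intro j
    refine (hw j).trans (le_of_eq ?_)
    rw [hρd]; ring
  classical
  set S : Finset (Fin p) := (Set.toFinite (suppSet βs)).toFinset with hSd
  have hSc : S.card ≤ s := by
    rw [← hcard, Set.ncard_eq_toFinset_card _ (Set.toFinite _)]
  have hSn : ∀ j, j ∉ S → βs j = 0 := by
    intro j hj
    by_contra h
    apply hj
    rw [hSd, Set.Finite.mem_toFinset]; exact h
  set y := X.mulVec βs + w with hy
  have hd := dyn (strongSet n βs σ) S βs (fun t => (glIter X y η α t).1) (fun t => (glIter X y η α t).2)
    (fun t => gradTerm X y (had (glIter X y η α t).1 (glIter X y η α t).2))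
    η α m N L (δ * Real.sqrt s) δ ρ ⌈4 * L / (η * m)⌉₊
    (fun j => rfl) (fun j => rfl) (fun t j => rfl) (fun t j => rfl)
    hη hη1 hα hα1 hp3 hm hmN hN1 hL hLα
    (fun j hj => ⟨hmS j hj, abs_le_nrmInf βs j⟩) hnon
    (by positivity) hθN hθ1 hδ hδ1 (by linarith) hLρ
    (fun j hj => ⟨fun h => h.1 (hSn j hj), hSn j hj⟩)
    (by
      intro t j M Q hM h1 h2
      have h3 := rip_grad X s δ hδ hs1' hR S hSc
        (had (glIter X y η α t).1 (glIter X y η α t).2 - βs) M Q hM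
        (fun k hk => h1 k hk)
        (by
          refine le_trans (le_of_eq ?_) h2
          apply Finset.sum_congr rfl
          intro k hk
          have := hSn k (Finset.mem_compl.1 hk)
          simp [had, this]) j
      have h4 := hw' j
      show |gradTerm X y (had (glIter X y η α t).1 (glIter X y η α t).2) j - _| ≤ _
      rw [hy, grad_eq, ← hy]
      rw [abs_le] at h3 h4 ⊢
      simp only [Pi.sub_apply, had] at h3 ⊢
      constructor <;> linarith [h3.1, h3.2, h4.1, h4.2])
    rfl t (htρ t htb)
  obtain ⟨hdA, hdB⟩ := hd
  have hlam0 : 0 < lam := lt_of_lt_of_le (by positivity) hla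
  have hlamρ : lam ≤ ρ / 4 := by
    refine hlb.trans (le_of_eq ?_); rw [hρd]; ring
  ext j
  constructor
  · intro hj
    by_contra hc
    apply hj
    have h1 := hdB j hc
    have h2 : α^2 < 1 / (p:ℝ) := by
      rw [lt_div_iff₀ hp0]; nlinarith
    rw [if_neg]
    intro h
    linarith
  · intro hj
    have h1 := hdA j hj (Nat.ceil_le.2 hta)
    have h2 : lam ≤ |(glIter X y η α t).1 j * (glIter X y η α t).2 j| := by
      refine le_trans ?_ h1
      linarith
    show (if _ then _ else _) ≠ _
    rw [if_pos h2]
    intro h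
    rw [h, abs_zero] at h2
    linarith

/-- Variable selection consistency (Theorem 3.3 of the paper): under Assumptions (A), (B), (C),
there are positive constants `c̃1, c̃2, c̃3, c̃4, c̃10, c̃11` such that with probability at
least `1 − p^{−c̃3} − n^{−c̃4}` over the Gaussian noise, for every iterate with
`c̃1·log(p/α)/(ηm) ≤ t ≤ c̃2/(ητ)` and every threshold `λ ∈ [c̃10/p, c̃11·σ√((log p)/n)]`,
the hard-thresholded estimator `β'_t` has support exactly `S1`. -/
theorem stmt9 :
    ∃ C c c1 c2 c3 c4 c10 c11 : ℝ,
      0 < C ∧ 0 < c ∧ 0 < c1 ∧ 0 < c2 ∧ 0 < c3 ∧ 0 < c4 ∧ 0 < c10 ∧ 0 < c11 ∧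
      ∀ (n p s s1 s2 : ℕ) (X : Matrix (Fin n) (Fin p) ℝ) (βs : Fin p → ℝ)
        (σ α η δ : ℝ),
        Assumptions s s1 s2 X βs σ α η δ C c →
        noiseMeasure n σ
            {w | ∀ t : ℕ,
              c1 * Real.log ((p : ℝ) / α) / (η * theta s1 βs) ≤ (t : ℝ) →
              (t : ℝ) ≤ c2 / (η * tauStat n p σ α δ) →
              ∀ lam : ℝ, c10 / (p : ℝ) ≤ lam →
                lam ≤ c11 * σ * Real.sqrt (Real.log p / (n : ℝ)) →
                {j : Fin p |
                    (if lam ≤ |(glIter X (X.mulVec βs + w) η α t).1 j *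
                          (glIter X (X.mulVec βs + w) η α t).2 j| then
                        (glIter X (X.mulVec βs + w) η α t).1 j *
                          (glIter X (X.mulVec βs + w) η α t).2 j
                      else 0) ≠ 0} = strongSet n βs σ} ≥
          ENNReal.ofReal (1 - (p : ℝ) ^ (-c3) - (n : ℝ) ^ (-c4)) := by
  refine ⟨1, 1/100, 4, 1/100, 1, 1, 1, 1/4, by norm_num, by norm_num, by norm_num, by norm_num,
    by norm_num, by norm_num, by norm_num, by norm_num, ?_⟩
  intro n p s s1 s2 X βs σ α η δ hA
  have hprob : IsProbabilityMeasure (noiseMeasure n σ) := by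
    unfold noiseMeasure; infer_instance
  have hnn : (0:ℝ) ≤ (n:ℝ) ^ (-1:ℝ) := by positivity
  have hpp : (0:ℝ) ≤ (p:ℝ) ^ (-1:ℝ) := by positivity
  by_cases hex : ∃ (t : ℕ) (lam : ℝ),
      4 * Real.log ((p : ℝ) / α) / (η * theta s1 βs) ≤ (t : ℝ) ∧
      (t : ℝ) ≤ (1/100) / (η * tauStat n p σ α δ) ∧
      1 / (p : ℝ) ≤ lam ∧ lam ≤ (1/4) * σ * Real.sqrt (Real.log p / (n : ℝ))
  · obtain ⟨t, lam, h1, h2, h3, h4⟩ := hex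
    refine le_trans ?_ (good_case hA t lam h1 h2 h3 h4)
    apply ENNReal.ofReal_le_ofReal
    linarith
  · refine le_trans (b := 1) ?_ ?_
    · rw [← ENNReal.ofReal_one]
      apply ENNReal.ofReal_le_ofReal
      linarith
    · rw [← measure_univ (μ := noiseMeasure n σ)]
      apply measure_mono
      intro w _ t ha hb lam hc hd
      exact absurd ⟨t, lam, ha, hb, hc, hd⟩ hex
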